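/- Let p₀ be the orthogonal projection onto the kernel of the Bott–Dirac operator B = D + F on L²(ℝ^d; 𝕊_d). Then p₀ is a rank-one projection, it commutes with the grading ι and with B, and on the orthogonal complement Im(1 − p₀) the restricted operator B satisfies B² ≥ 1. Hence the decomposition L² = Im(p₀) ⊕ Im(1−p₀) splits B into a zero operator on a one-dimensional space and an invertible operator (with spectral gap (−1,1)) on the complement. -/

import Mathlib

/-! Statement 17: the orthogonal projection `p₀` onto the kernel of the Bott–Dirac operator
`B = D + F` on `L²(ℝ^d; 𝕊_d)` is a rank-one projection commuting with the grading `ι` and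
with `B`, and on the orthogonal complement of the kernel one has `B² ≥ 1`: the decomposition
`L² = Im p₀ ⊕ Im (1−p₀)` splits `B` into zero on a one-dimensional space and an operator
with spectral gap `(−1,1)` on the complement. -/

noncomputable section
open MeasureTheory RealInnerProductSpace

/-- Euclidean `d`-space, the domain of the Bott–Dirac operator. -/
abbrev Ed (d : ℕ) := EuclideanSpace ℝ (Fin d)

variable {d : ℕ} {S : Type} [NormedAddCommGroup S] [InnerProductSpace ℝ S]

/-- The Dirac operator `D = Σ_j e_j ∂_j` on functions `ℝ^d → 𝕊_d`. -/
noncomputable def Dop (e : Fin d → S →L[ℝ] S) (f : Ed d → S) : Ed d → S :=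
  fun x => ∑ j, e j (fderiv ℝ f x (EuclideanSpace.single j 1))

/-- The potential `F = Σ_j x^j ε_j`. -/
noncomputable def Fop (ε : Fin d → S →L[ℝ] S) (f : Ed d → S) : Ed d → S :=
  fun x => ∑ j, x j • ε j (f x)

/-- The Bott–Dirac operator (supersymmetric harmonic oscillator) `B = D + F`. -/
noncomputable def Bop (e ε : Fin d → S →L[ℝ] S) (f : Ed d → S) : Ed d → S :=
  fun x => Dop e f x + Fop ε f x

/-- The bounded operator `ν = Σ_i e_i ε_i`. -/
noncomputable def nuOp (e ε : Fin d → S →L[ℝ] S) : S →L[ℝ] S :=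
  ∑ i, (e i).comp (ε i)

/-- The Gaussian ground state `x ↦ e^{−|x|²/2} · u`, where `u` is the vacuum vector. -/
noncomputable def gaussian (d : ℕ) {S : Type} [NormedAddCommGroup S] [InnerProductSpace ℝ S]
    (u : S) : Ed d → S :=
  fun x => Real.exp (-‖x‖ ^ 2 / 2) • u

/-- The orthogonal projection onto the span of the Gaussian ground state (the kernel of `B`). -/
noncomputable def kerProj (d : ℕ) {S : Type} [NormedAddCommGroup S] [InnerProductSpace ℝ S]
    (u : S) (f : Ed d → S) : Ed d → S :=
  fun x => ((∫ y, ⟪f y, gaussian d u y⟫) / ∫ y, ‖gaussian d u y‖ ^ 2) • gaussian d u x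

theorem integral_fderiv_apply_eq_zero {E : Type*} [NormedAddCommGroup E] [NormedSpace ℝ E]
    [FiniteDimensional ℝ E] [MeasurableSpace E] [BorelSpace E] {μ : Measure E}
    [μ.IsAddHaarMeasure] {g : E → ℝ} {v : E} (hg : Differentiable ℝ g) (hi : Integrable g μ)
    (hi' : Integrable (fun x => fderiv ℝ g x v) μ) : ∫ x, fderiv ℝ g x v ∂μ = 0 := by
  have h := integral_mul_fderiv_eq_neg_fderiv_mul_of_integrable (μ := μ) (𝕜 := ℝ)
    (f := fun _ : E => (1 : ℝ)) (g := g) (v := v)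
    (by simp) (by simpa using hi') (by simpa using hi) (fun x _ => by fun_prop)
    (fun x _ => hg x)
  simpa using h

section Gaussian

variable {E : Type*} [NormedAddCommGroup E] [InnerProductSpace ℝ E] [FiniteDimensional ℝ E]
  [MeasurableSpace E] [BorelSpace E]

theorem integrable_exp_neg_mul_sq_norm {b : ℝ} (hb : 0 < b) :
    Integrable (fun x : E => Real.exp (-b * ‖x‖ ^ 2)) := by
  have h := (GaussianFourier.integrable_cexp_neg_mul_sq_norm_add (V := E) (b := (b : ℂ)) (by simpa using hb)
    0 0).re
  refine h.congr (Filter.Eventually.of_forall fun x => ?_)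
  simp only [zero_mul, add_zero]
  norm_cast

theorem integrable_one_add_sq_norm_mul_exp_neg_sq_norm :
    Integrable (fun x : E => (1 + ‖x‖ ^ 2) * Real.exp (-‖x‖ ^ 2)) := by
  refine ((integrable_exp_neg_mul_sq_norm (E := E) (b := 1 / 2) (by norm_num)).const_mul 2).mono'
    (by fun_prop) (Filter.Eventually.of_forall fun x => ?_)
  have h1 : 1 + ‖x‖ ^ 2 ≤ 2 * Real.exp (‖x‖ ^ 2 / 2) := by
    linarith [Real.add_one_le_exp (‖x‖ ^ 2 / 2)]
  rw [Real.norm_of_nonneg (by positivity)]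
  calc _ ≤ (2 * Real.exp (‖x‖ ^ 2 / 2)) * Real.exp (-‖x‖ ^ 2) := by gcongr
    _ = _ := by rw [mul_assoc, ← Real.exp_add]; ring_nf

theorem integrable_exp_neg_sq_norm : Integrable (fun x : E => Real.exp (-‖x‖ ^ 2)) := by
  simpa using integrable_exp_neg_mul_sq_norm (E := E) one_pos

theorem integral_exp_neg_sq_norm_pos : 0 < ∫ x : E, Real.exp (-‖x‖ ^ 2) :=
  integral_exp_pos integrable_exp_neg_sq_norm

theorem hasFDerivAt_exp_neg_sq_norm {E : Type*} [NormedAddCommGroup E] [InnerProductSpace ℝ E]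
    (x : E) : HasFDerivAt (fun x : E => Real.exp (-‖x‖ ^ 2))
      (Real.exp (-‖x‖ ^ 2) • (-(2 • innerSL ℝ x) : E →L[ℝ] ℝ)) x :=
  (hasStrictFDerivAt_norm_sq x).hasFDerivAt.neg.exp

theorem integral_exp_neg_sq_norm_mul_sq (L : E →L[ℝ] ℝ) :
    ∫ y : E, Real.exp (-‖y‖ ^ 2) * L y ^ 2 = ‖L‖ ^ 2 / 2 * ∫ y : E, Real.exp (-‖y‖ ^ 2) := by
  obtain ⟨v, rfl⟩ := (InnerProductSpace.toDual ℝ E).surjective L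
  rw [LinearIsometryEquiv.norm_map]
  simp only [InnerProductSpace.toDual_apply_apply]
  have hI1 : Integrable (fun y : E => Real.exp (-‖y‖ ^ 2) * ⟪v, y⟫ ^ 2) := by
    refine (integrable_one_add_sq_norm_mul_exp_neg_sq_norm.const_mul (‖v‖ ^ 2)).mono'
      (by fun_prop) (Filter.Eventually.of_forall fun x => ?_)
    rw [Real.norm_of_nonneg (by positivity)]
    have h1 : ⟪v, x⟫ ^ 2 ≤ (‖v‖ * ‖x‖) ^ 2 := by
      rw [← sq_abs]; gcongr; exact abs_real_inner_le_norm v x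
    calc _ ≤ Real.exp (-‖x‖ ^ 2) * (‖v‖ * ‖x‖) ^ 2 := by gcongr
      _ ≤ _ := by
        have : 0 ≤ Real.exp (-‖x‖ ^ 2) * ‖v‖ ^ 2 := by positivity
        nlinarith
  have hd : ∀ y : E, HasFDerivAt (fun y : E => Real.exp (-‖y‖ ^ 2) * ⟪v, y⟫)
      (Real.exp (-‖y‖ ^ 2) • innerSL ℝ v +
        ⟪v, y⟫ • (Real.exp (-‖y‖ ^ 2) • (-(2 • innerSL ℝ y) : E →L[ℝ] ℝ))) y := fun y =>
    (hasFDerivAt_exp_neg_sq_norm y).mul (innerSL ℝ v).hasFDerivAt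
  have hd' : ∀ y : E, fderiv ℝ (fun y : E => Real.exp (-‖y‖ ^ 2) * ⟪v, y⟫) y v =
      ‖v‖ ^ 2 * Real.exp (-‖y‖ ^ 2) - 2 * (Real.exp (-‖y‖ ^ 2) * ⟪v, y⟫ ^ 2) := fun y => by
    rw [(hd y).fderiv]
    simp [real_inner_comm v y]
    ring
  have hI2 : Integrable (fun y : E => Real.exp (-‖y‖ ^ 2) * ⟪v, y⟫) := by
    refine (integrable_one_add_sq_norm_mul_exp_neg_sq_norm.const_mul ‖v‖).mono'
      (by fun_prop) (Filter.Eventually.of_forall fun x => ?_)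
    rw [norm_mul, Real.norm_of_nonneg (Real.exp_nonneg _)]
    calc _ ≤ Real.exp (-‖x‖ ^ 2) * (‖v‖ * ‖x‖) := by gcongr; exact norm_inner_le_norm v x
      _ ≤ Real.exp (-‖x‖ ^ 2) * (‖v‖ * (1 + ‖x‖ ^ 2)) := by
        gcongr; nlinarith [sq_nonneg (‖x‖ - 1), norm_nonneg x]
      _ = _ := by ring
  have h0 := integral_fderiv_apply_eq_zero (v := v) (μ := volume)
    (fun y => (hd y).differentiableAt) hI2
    (by
      simp only [hd']
      exact (integrable_exp_neg_sq_norm.const_mul _).sub (hI1.const_mul 2))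
  simp only [hd'] at h0
  rw [integral_sub (integrable_exp_neg_sq_norm.const_mul _) (hI1.const_mul 2),
    integral_const_mul, integral_const_mul] at h0
  linarith

theorem rotation_norm_sq_add {E : Type*} [NormedAddCommGroup E] [InnerProductSpace ℝ E] (θ : ℝ) (p : E × E) :
    ‖(ContinuousLinearMap.rotation θ p).1‖ ^ 2 + ‖(ContinuousLinearMap.rotation θ p).2‖ ^ 2 =
      ‖p.1‖ ^ 2 + ‖p.2‖ ^ 2 := by
  simp only [ContinuousLinearMap.rotation_apply]
  rw [norm_add_sq_real, norm_add_sq_real]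
  simp only [norm_smul, inner_smul_left, inner_smul_right, mul_pow, Real.norm_eq_abs, sq_abs,
    abs_neg, conj_trivial]
  linear_combination (‖p.1‖ ^ 2 + ‖p.2‖ ^ 2) * Real.sin_sq_add_cos_sq θ

theorem integral_comp_rotation_mul_exp (θ : ℝ) (G : E × E → ℝ) :
    ∫ p : E × E, G (ContinuousLinearMap.rotation θ p) *
        (Real.exp (-‖p.1‖ ^ 2) * Real.exp (-‖p.2‖ ^ 2)) =
      ∫ p : E × E, G p * (Real.exp (-‖p.1‖ ^ 2) * Real.exp (-‖p.2‖ ^ 2)) := by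
  set R : E × E →L[ℝ] E × E := ContinuousLinearMap.rotation θ with hR
  have hcs := Real.sin_sq_add_cos_sq θ
  have hinv : ∀ p, ContinuousLinearMap.rotation (-θ) (R p) = p := fun p => by
    have h1 : Real.cos θ * Real.cos θ + Real.sin θ * Real.sin θ = 1 := by linarith
    ext1 <;> simp only [hR, ContinuousLinearMap.rotation_apply, Real.cos_neg, Real.sin_neg]
    · trans (Real.cos θ * Real.cos θ + Real.sin θ * Real.sin θ) • p.1
      · module
      · rw [h1, one_smul]
    · trans (Real.cos θ * Real.cos θ + Real.sin θ * Real.sin θ) • p.2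
      · module
      · rw [h1, one_smul]
  have hinj : Function.Injective R := Function.LeftInverse.injective hinv
  have hdet : LinearMap.det (R : E × E →ₗ[ℝ] E × E) ≠ 0 := by
    exact (LinearEquiv.isUnit_det' (LinearEquiv.ofInjectiveEndo (R : E × E →ₗ[ℝ] E × E)
      hinj)).ne_zero
  have hemb : MeasurableEmbedding R :=
    (R : E × E →ₗ[ℝ] E × E).toContinuousLinearMap.continuous.measurableEmbedding hinj
  set W : E × E → ℝ := fun p => Real.exp (-‖p.1‖ ^ 2) * Real.exp (-‖p.2‖ ^ 2) with hW
  have hWR : ∀ p, W (R p) = W p := fun p => by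
    simp only [hW, ← Real.exp_add]
    congr 1
    linarith [rotation_norm_sq_add θ p]
  have : (volume : Measure (E × E)).IsAddHaarMeasure := by
    rw [Measure.volume_eq_prod]; infer_instance
  set c := |(LinearMap.det (R : E × E →ₗ[ℝ] E × E))⁻¹| with hc
  have key : ∀ H : E × E → ℝ, ∫ p, H (R p) = c * ∫ p, H p := fun H => by
    rw [← hemb.integral_map]
    have := Measure.map_linearMap_addHaar_eq_smul_addHaar (volume : Measure (E × E)) hdet
    rw [ContinuousLinearMap.coe_coe] at this
    rw [this, integral_smul_measure, ENNReal.toReal_ofReal (abs_nonneg _), smul_eq_mul]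
  have hWpos : 0 < ∫ p, W p := by
    simp only [hW]
    rw [Measure.volume_eq_prod, integral_prod_mul (fun x : E => Real.exp (-‖x‖ ^ 2))
      (fun x : E => Real.exp (-‖x‖ ^ 2))]
    exact mul_pos integral_exp_neg_sq_norm_pos integral_exp_neg_sq_norm_pos
  have hc1 : c = 1 := by
    have := key W
    simp only [hWR] at this
    have h2 : (1 - c) * ∫ p, W p = 0 := by linarith
    rcases mul_eq_zero.1 h2 with h | h <;> linarith
  have := key (fun p => G p * W p)
  simpa only [hWR, hc1, one_mul] using this

end Gaussian

theorem sq_intervalIntegral_le {f : ℝ → ℝ} (hf : Continuous f) {a : ℝ} (ha : 0 < a) :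
    (∫ t in (0 : ℝ)..a, f t) ^ 2 ≤ a * ∫ t in (0 : ℝ)..a, f t ^ 2 := by
  set m := ∫ t in (0 : ℝ)..a, f t with hm
  have h : 0 ≤ ∫ t in (0 : ℝ)..a, (a * f t - m) ^ 2 :=
    intervalIntegral.integral_nonneg ha.le fun t _ => sq_nonneg _
  have h2 : ∫ t in (0 : ℝ)..a, (a * f t - m) ^ 2 =
      a ^ 2 * (∫ t in (0 : ℝ)..a, f t ^ 2) - 2 * a * m * m + a * m ^ 2 := by
    have : ∀ t, (a * f t - m) ^ 2 = a ^ 2 * f t ^ 2 - 2 * a * m * f t + m ^ 2 := fun t => by ring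
    simp only [this]
    rw [intervalIntegral.integral_add, intervalIntegral.integral_sub,
      intervalIntegral.integral_const_mul, intervalIntegral.integral_const_mul]
    · simp [hm]
    all_goals exact Continuous.intervalIntegrable (by fun_prop) _ _
  rw [h2] at h
  have : 0 ≤ a * (a * (∫ t in (0 : ℝ)..a, f t ^ 2) - m ^ 2) := by linarith
  linarith [nonneg_of_mul_nonneg_right this ha]

section Poincare

variable {E : Type*} [NormedAddCommGroup E] [InnerProductSpace ℝ E] [FiniteDimensional ℝ E]
  [MeasurableSpace E] [BorelSpace E]

theorem sub_sq_le_integral_rotation {E : Type*} [NormedAddCommGroup E] [InnerProductSpace ℝ E]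
    {h : E → ℝ} (hh : ContDiff ℝ 1 h) (p : E × E) :
    (h p.2 - h p.1) ^ 2 ≤ Real.pi / 2 * ∫ θ in (0 : ℝ)..(Real.pi / 2),
      (fderiv ℝ h (ContinuousLinearMap.rotation θ p).1
        (ContinuousLinearMap.rotation θ p).2) ^ 2 := by
  have hcd : Continuous (fderiv ℝ h) := hh.continuous_fderiv (by norm_num)
  have hcont : Continuous fun θ : ℝ => fderiv ℝ h (ContinuousLinearMap.rotation θ p).1
      (ContinuousLinearMap.rotation θ p).2 := by
    simp only [ContinuousLinearMap.rotation_apply]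
    fun_prop
  have hder : ∀ θ : ℝ, HasDerivAt (fun θ : ℝ => h (ContinuousLinearMap.rotation θ p).1)
      (fderiv ℝ h (ContinuousLinearMap.rotation θ p).1
        (ContinuousLinearMap.rotation θ p).2) θ := fun θ => by
    have h1 : HasDerivAt (fun θ : ℝ => (ContinuousLinearMap.rotation θ p).1)
        (ContinuousLinearMap.rotation θ p).2 θ :=
      ((Real.hasDerivAt_cos θ).smul_const p.1).add ((Real.hasDerivAt_sin θ).smul_const p.2)
    exact ((hh.differentiable (by norm_num)) _).hasFDerivAt.comp_hasDerivAt θ h1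
  have hftc := intervalIntegral.integral_eq_sub_of_hasDerivAt (a := 0) (b := Real.pi / 2)
    (fun θ _ => hder θ) (hcont.intervalIntegrable _ _)
  have : (h p.2 - h p.1) = ∫ θ in (0 : ℝ)..(Real.pi / 2),
      fderiv ℝ h (ContinuousLinearMap.rotation θ p).1 (ContinuousLinearMap.rotation θ p).2 := by
    rw [hftc]; simp [ContinuousLinearMap.rotation_apply]
  rw [this]
  exact sq_intervalIntegral_le hcont (by positivity)

/-- The Gaussian Poincaré inequality, with a constant that is not optimal. -/
theorem gaussian_poincare {h : E → ℝ} (hh : ContDiff ℝ 1 h) (hc : HasCompactSupport h)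
    (h0 : ∫ x, Real.exp (-‖x‖ ^ 2) * h x = 0) :
    ∫ x, Real.exp (-‖x‖ ^ 2) * h x ^ 2 ≤ ∫ x, Real.exp (-‖x‖ ^ 2) * ‖fderiv ℝ h x‖ ^ 2 := by
  have hrot := fun θ => integral_comp_rotation_mul_exp (E := E) θ
  have hmom := integral_exp_neg_sq_norm_mul_sq (E := E)
  have hw2 := integrable_one_add_sq_norm_mul_exp_neg_sq_norm (E := E)
  have hwi := integrable_exp_neg_sq_norm (E := E)
  have hZ0 := integral_exp_neg_sq_norm_pos (E := E)
  have hwc : Continuous fun x : E => Real.exp (-‖x‖ ^ 2) := by fun_prop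
  have hw0 : ∀ x : E, 0 ≤ Real.exp (-‖x‖ ^ 2) := fun x => Real.exp_nonneg _
  generalize hw : (fun x : E => Real.exp (-‖x‖ ^ 2)) = w at *
  have hw' : ∀ x, Real.exp (-‖x‖ ^ 2) = w x := fun x => congrFun hw x
  simp only [hw'] at *
  generalize hZ : ∫ x, w x = Z at *
  have hcd : Continuous (fderiv ℝ h) := hh.continuous_fderiv (by norm_num)
  obtain ⟨C, hC⟩ := (hc.fderiv (𝕜 := ℝ)).exists_bound_of_continuous hcd
  obtain ⟨K, hK⟩ : ∃ K : E × E → ℝ, K = fun p => (fderiv ℝ h p.1 p.2) ^ 2 := ⟨_, rfl⟩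
  have hKc : Continuous K := by rw [hK]; fun_prop
  have hK0 : ∀ p, 0 ≤ K p := fun p => by rw [hK]; exact sq_nonneg _
  have hrotc : Continuous fun q : ℝ × (E × E) => ContinuousLinearMap.rotation q.1 q.2 := by
    simp only [ContinuousLinearMap.rotation_apply]; fun_prop
  have hKb : ∀ p, K p ≤ C ^ 2 * ‖p.2‖ ^ 2 := fun p => by
    have h1 : ‖fderiv ℝ h p.1 p.2‖ ≤ C * ‖p.2‖ :=
      ((fderiv ℝ h p.1).le_opNorm _).trans (by gcongr; exact hC _)
    simpa [hK, mul_pow] using pow_le_pow_left₀ (norm_nonneg _) h1 2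
  have hdom : Integrable (fun p : E × E =>
      C ^ 2 * (((1 + ‖p.1‖ ^ 2) * w p.1) * ((1 + ‖p.2‖ ^ 2) * w p.2))) :=
    (hw2.mul_prod hw2).const_mul _
  have hbd : ∀ θ p, K (ContinuousLinearMap.rotation θ p) * (w p.1 * w p.2) ≤
      C ^ 2 * (((1 + ‖p.1‖ ^ 2) * w p.1) * ((1 + ‖p.2‖ ^ 2) * w p.2)) := fun θ p => by
    have h1 := hKb (ContinuousLinearMap.rotation θ p)
    have h2 := rotation_norm_sq_add θ p
    have h3 : K (ContinuousLinearMap.rotation θ p) ≤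
        C ^ 2 * ((1 + ‖p.1‖ ^ 2) * (1 + ‖p.2‖ ^ 2)) := by
      refine h1.trans ?_
      gcongr
      nlinarith [sq_nonneg ‖(ContinuousLinearMap.rotation θ p).1‖,
        mul_nonneg (sq_nonneg ‖p.1‖) (sq_nonneg ‖p.2‖)]
    calc _ ≤ C ^ 2 * ((1 + ‖p.1‖ ^ 2) * (1 + ‖p.2‖ ^ 2)) * (w p.1 * w p.2) := by
          gcongr; exact mul_nonneg (hw0 _) (hw0 _)
      _ = _ := by ring
  have hint : Integrable (fun q : ℝ × (E × E) =>
      K (ContinuousLinearMap.rotation q.1 q.2) * (w q.2.1 * w q.2.2))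
      ((volume.restrict (Set.uIoc 0 (Real.pi / 2))).prod volume) := by
    have : IsFiniteMeasure (volume.restrict (Set.uIoc 0 (Real.pi / 2))) :=
      ⟨by simp [Set.uIoc]⟩
    refine (hdom.comp_snd (volume.restrict (Set.uIoc 0 (Real.pi / 2)))).mono'
      (Continuous.aestronglyMeasurable (by fun_prop)) (Filter.Eventually.of_forall fun q => ?_)
    rw [Real.norm_of_nonneg (mul_nonneg (hK0 _) (mul_nonneg (hw0 _) (hw0 _)))]
    exact hbd _ _
  have hupper : ∫ p : E × E, (h p.2 - h p.1) ^ 2 * (w p.1 * w p.2) ≤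
      Real.pi / 2 * (Real.pi / 2 * ∫ p : E × E, K p * (w p.1 * w p.2)) := by
    calc ∫ p : E × E, (h p.2 - h p.1) ^ 2 * (w p.1 * w p.2)
        ≤ ∫ p : E × E, Real.pi / 2 * ∫ θ in (0 : ℝ)..(Real.pi / 2),
            K (ContinuousLinearMap.rotation θ p) * (w p.1 * w p.2) := by
          refine integral_mono_of_nonneg (Filter.Eventually.of_forall fun p =>
            mul_nonneg (sq_nonneg _) (mul_nonneg (hw0 _) (hw0 _))) ?_
            (Filter.Eventually.of_forall fun p => ?_)
          · refine Integrable.const_mul ?_ _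
            have := hint.integral_prod_right
            simp only [intervalIntegral.intervalIntegral_eq_integral_uIoc]
            rw [if_pos (by positivity)]
            simpa using this
          · simp only [intervalIntegral.integral_mul_const]
            rw [← mul_assoc (Real.pi / 2)]
            rw [hK]
            exact mul_le_mul_of_nonneg_right (sub_sq_le_integral_rotation hh p)
              (mul_nonneg (hw0 _) (hw0 _))
      _ = Real.pi / 2 * ∫ θ in (0 : ℝ)..(Real.pi / 2), ∫ p : E × E,
            K (ContinuousLinearMap.rotation θ p) * (w p.1 * w p.2) := by
          rw [integral_const_mul, intervalIntegral_integral_swap hint]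
      _ = _ := by
          simp only [hrot _ K]
          simp
  have hhw : Integrable (fun x => h x * w x) :=
    (hh.continuous.mul hwc).integrable_of_hasCompactSupport hc.mul_right
  have hh2w : Integrable (fun x => h x ^ 2 * w x) := by
    have : Integrable (fun x => h x * (h x * w x)) :=
      (hh.continuous.mul (hh.continuous.mul hwc)).integrable_of_hasCompactSupport hc.mul_right
    simpa only [sq, mul_assoc] using this
  have hmean : ∫ x, h x * w x = 0 := by simpa only [mul_comm] using h0
  have hlower : ∫ p : E × E, (h p.2 - h p.1) ^ 2 * (w p.1 * w p.2) =
      2 * Z * ∫ x, h x ^ 2 * w x := by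
    have : ∀ p : E × E, (h p.2 - h p.1) ^ 2 * (w p.1 * w p.2) =
        w p.1 * (h p.2 ^ 2 * w p.2) - 2 * ((h p.1 * w p.1) * (h p.2 * w p.2)) +
          (h p.1 ^ 2 * w p.1) * w p.2 := fun p => by ring
    simp only [this]
    rw [Measure.volume_eq_prod, integral_add, integral_sub, integral_const_mul,
      integral_prod_mul w (fun x => h x ^ 2 * w x),
      integral_prod_mul (fun x => h x * w x) (fun x => h x * w x),
      integral_prod_mul (fun x => h x ^ 2 * w x) w, hmean, hZ]
    · ring
    · exact hwi.mul_prod hh2w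
    · exact (hhw.mul_prod hhw).const_mul 2
    · exact (hwi.mul_prod hh2w).sub ((hhw.mul_prod hhw).const_mul 2)
    · exact hh2w.mul_prod hwi
  have hmid : ∫ p : E × E, K p * (w p.1 * w p.2) =
      Z / 2 * ∫ x, w x * ‖fderiv ℝ h x‖ ^ 2 := by
    have hKi : Integrable (fun p : E × E => K p * (w p.1 * w p.2)) (volume.prod volume) := by
      refine hdom.mono' (Continuous.aestronglyMeasurable (by fun_prop))
        (Filter.Eventually.of_forall fun p => ?_)
      rw [Real.norm_of_nonneg (mul_nonneg (hK0 _) (mul_nonneg (hw0 _) (hw0 _)))]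
      simpa [ContinuousLinearMap.rotation_apply] using hbd 0 p
    rw [Measure.volume_eq_prod, integral_prod _ hKi, ← integral_const_mul]
    congr 1 with x
    have : ∀ y, K (x, y) * (w x * w y) = w x * (w y * fderiv ℝ h x y ^ 2) := fun y => by
      simp only [hK]; ring
    simp only [this]
    rw [integral_const_mul, hmom]
    ring
  rw [hlower, hmid] at hupper
  have hG : 0 ≤ ∫ x, w x * ‖fderiv ℝ h x‖ ^ 2 :=
    integral_nonneg fun x => mul_nonneg (hw0 _) (sq_nonneg _)
  have hpi : Real.pi / 2 * (Real.pi / 2) ≤ 4 := by nlinarith [Real.pi_le_four, Real.pi_pos]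
  have hfin : 2 * Z * (∫ x, h x ^ 2 * w x) ≤ 2 * Z * ∫ x, w x * ‖fderiv ℝ h x‖ ^ 2 := by
    refine hupper.trans ?_
    have : 0 ≤ Z / 2 * ∫ x, w x * ‖fderiv ℝ h x‖ ^ 2 := by positivity
    nlinarith
  have := le_of_mul_le_mul_left hfin (by positivity)
  simpa only [mul_comm] using this

end Poincare

section Clifford

theorem exists_number_eigenvector {e ε : Fin d → S →L[ℝ] S}
    (hee : ∀ i j (x : S), e i (e j x) + e j (e i x) = if i = j then (-2 : ℝ) • x else 0)
    (heε : ∀ i j (x : S), e i (ε j x) + ε j (e i x) = 0)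
    {u : S} (hu : u ≠ 0) (hvac : ∀ j, e j u = ε j u) (s : Finset (Fin d)) :
    ∃ w : S, w ≠ 0 ∧ (s = ∅ → w = u) ∧ ∀ j, e j (ε j w) = if j ∈ s then w else -w := by
  have hsq : ∀ i x, e i (e i x) = -x := fun i x => by
    have h := hee i i x
    rw [if_pos rfl, ← two_smul ℝ, neg_smul, ← smul_neg] at h
    exact smul_right_injective S (two_ne_zero (α := ℝ)) h
  have hanti : ∀ i j x, ε j (e i x) = -e i (ε j x) := fun i j x =>
    eq_neg_of_add_eq_zero_right (heε i j x)
  induction s using Finset.induction_on with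
  | empty => exact ⟨u, hu, fun _ => rfl, fun j => by simp [← hvac, hsq]⟩
  | insert k s hk ih =>
    obtain ⟨w, hw, -, hN⟩ := ih
    refine ⟨e k w, fun h => hw ?_, fun h => absurd h (Finset.insert_ne_empty k s), fun j => ?_⟩
    · rw [← neg_eq_zero, ← hsq k, h, map_zero]
    · rcases eq_or_ne j k with rfl | hjk
      · rw [hanti, map_neg, hN, if_neg hk, if_pos (Finset.mem_insert_self _ _)]
        simp
      · have h := hee j k (ε j w)
        rw [if_neg hjk] at h
        rw [hanti, map_neg, eq_neg_of_add_eq_zero_left h, hN, neg_neg]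
        by_cases hj : j ∈ s <;> simp [hj, hjk]

/-- The number operator is bounded below by `1` on the complement of the vacuum. -/
theorem sq_norm_sub_vacuum_le {e ε : Fin d → S →L[ℝ] S}
    (hdim : Module.finrank ℝ S = 2 ^ d)
    (hee : ∀ i j (x : S), e i (e j x) + e j (e i x) = if i = j then (-2 : ℝ) • x else 0)
    (heε : ∀ i j (x : S), e i (ε j x) + ε j (e i x) = 0)
    (he' : ∀ i (x y : S), ⟪e i x, y⟫ = -⟪x, e i y⟫)
    (hε' : ∀ i (x y : S), ⟪ε i x, y⟫ = ⟪x, ε i y⟫)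
    {u : S} (hu : u ≠ 0) (hvac : ∀ j, e j u = ε j u) (v : S) :
    ‖v‖ ^ 2 - ⟪u, v⟫ ^ 2 / ‖u‖ ^ 2 ≤ ∑ j, (‖v‖ ^ 2 + ⟪v, e j (ε j v)⟫) := by
  choose w hw hwu hN using exists_number_eigenvector hee heε hu hvac
  have hanti : ∀ i j x, ε j (e i x) = -e i (ε j x) := fun i j x =>
    eq_neg_of_add_eq_zero_right (heε i j x)
  have hsymm : ∀ j x y, ⟪e j (ε j x), y⟫ = ⟪x, e j (ε j y)⟫ := fun j x y => by
    rw [he', hε', hanti, inner_neg_right, neg_neg]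
  have hsgn : ∀ j s, e j (ε j (w s)) = (if j ∈ s then (1 : ℝ) else -1) • w s := fun j s => by
    rw [hN]; split_ifs <;> simp
  have horth : ∀ s t, s ≠ t → ⟪w s, w t⟫ = 0 := fun s t hst => by
    obtain ⟨j, hj⟩ : ∃ j, ¬(j ∈ s ↔ j ∈ t) := by
      by_contra! h
      exact hst (Finset.ext h)
    have h := hsymm j (w s) (w t)
    rw [hN, hN] at h
    by_cases h1 : j ∈ s <;> by_cases h2 : j ∈ t <;>
      simp only [h1, h2, if_true, if_false, inner_neg_left, inner_neg_right, iff_self, not_true]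
        at h hj <;> linarith
  have hon : Orthonormal ℝ fun s => (‖w s‖⁻¹ : ℝ) • w s := by
    refine ⟨fun s => norm_smul_inv_norm (𝕜 := ℝ) (hw s), fun s t hst => ?_⟩
    simp [inner_smul_left, inner_smul_right, horth s t hst]
  have : FiniteDimensional ℝ S := Module.finite_of_finrank_pos (by rw [hdim]; positivity)
  have hcard : Fintype.card (Finset (Fin d)) = Module.finrank ℝ S := by simp [hdim]
  let b₀ := basisOfOrthonormalOfCardEqFinrank hon hcard
  have hb₀ : ⇑b₀ = fun s => (‖w s‖⁻¹ : ℝ) • w s :=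
    coe_basisOfOrthonormalOfCardEqFinrank hon hcard
  let b : OrthonormalBasis (Finset (Fin d)) ℝ S := b₀.toOrthonormalBasis (by rwa [hb₀])
  have hb : ∀ s, b s = (‖w s‖⁻¹ : ℝ) • w s := fun s => by
    simp [b, hb₀]
  have hbN : ∀ j s, e j (ε j (b s)) = (if j ∈ s then (1 : ℝ) else -1) • b s := fun j s => by
    rw [hb, map_smul, map_smul, hsgn, smul_comm]
  have hnorm : ‖v‖ ^ 2 = ∑ s, ⟪b s, v⟫ ^ 2 := by
    simpa using (b.sum_sq_norm_inner_right v).symm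
  have hnum : ∀ j, ‖v‖ ^ 2 + ⟪v, e j (ε j v)⟫ =
      ∑ s, (if j ∈ s then 2 * ⟪b s, v⟫ ^ 2 else 0) := fun j => by
    rw [← b.sum_inner_mul_inner v (e j (ε j v)), hnorm, ← Finset.sum_add_distrib]
    refine Finset.sum_congr rfl fun s _ => ?_
    rw [← hsymm, hbN, inner_smul_left, real_inner_comm]
    split_ifs <;> simp <;> ring
  have hvacuum : ⟪u, v⟫ ^ 2 / ‖u‖ ^ 2 = ⟪b ∅, v⟫ ^ 2 := by
    rw [hb, hwu ∅ rfl, inner_smul_left]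
    simp [mul_pow]
    ring
  simp only [hnum]
  rw [Finset.sum_comm, hnorm, hvacuum, sub_le_iff_le_add,
    ← Finset.add_sum_erase _ _ (Finset.mem_univ ∅), add_comm]
  gcongr
  rw [← Finset.add_sum_erase Finset.univ (fun s => ∑ j, if j ∈ s then 2 * ⟪b s, v⟫ ^ 2 else 0)
    (Finset.mem_univ ∅)]
  simp only [Finset.notMem_empty, if_false, Finset.sum_const_zero, zero_add]
  refine Finset.sum_le_sum fun s hs => ?_
  obtain ⟨j, hj⟩ := Finset.nonempty_iff_ne_empty.2 (Finset.ne_of_mem_erase hs)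
  calc ⟪b s, v⟫ ^ 2 ≤ if j ∈ s then 2 * ⟪b s, v⟫ ^ 2 else 0 := by
        rw [if_pos hj]; nlinarith [sq_nonneg ⟪b s, v⟫]
    _ ≤ _ := Finset.single_le_sum (f := fun j => if j ∈ s then 2 * ⟪b s, v⟫ ^ 2 else 0)
        (fun i _ => by positivity) (Finset.mem_univ j)

end Clifford

section Energy

theorem integrable_of_eq_zero_off_tsupport {F : Type*} [NormedAddCommGroup F] {f : Ed d → F}
    (hc : HasCompactSupport f) {q : Ed d → ℝ} (hq : Continuous q)
    (h0 : ∀ x, x ∉ tsupport f → q x = 0) : Integrable q :=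
  hq.integrable_of_hasCompactSupport (HasCompactSupport.intro hc h0)

theorem integral_inner_fderiv_add_eq_zero {a b : Ed d → S} (ha : ContDiff ℝ 1 a)
    (hb : ContDiff ℝ 1 b) (hc : HasCompactSupport b) (v : Ed d) :
    ∫ x, (⟪a x, fderiv ℝ b x v⟫ + ⟪fderiv ℝ a x v, b x⟫) = 0 := by
  have ha' : Differentiable ℝ a := ha.differentiable (by norm_num)
  have hb' : Differentiable ℝ b := hb.differentiable (by norm_num)
  have hca : Continuous (fderiv ℝ a) := ha.continuous_fderiv (by norm_num)
  have hcb : Continuous (fderiv ℝ b) := hb.continuous_fderiv (by norm_num)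
  have hd : ∀ x, fderiv ℝ (fun x => ⟪a x, b x⟫) x v =
      ⟪a x, fderiv ℝ b x v⟫ + ⟪fderiv ℝ a x v, b x⟫ := fun x =>
    fderiv_inner_apply ℝ (ha' x) (hb' x) v
  simp only [← hd]
  refine integral_fderiv_apply_eq_zero (ha'.inner ℝ hb') ?_ ?_
  · exact integrable_of_eq_zero_off_tsupport hc (ha.continuous.inner hb.continuous)
      fun x hx => by simp [image_eq_zero_of_notMem_tsupport hx]
  · simp only [hd]
    refine integrable_of_eq_zero_off_tsupport hc (by fun_prop) fun x hx => ?_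
    simp [image_eq_zero_of_notMem_tsupport hx, fderiv_of_notMem_tsupport (𝕜 := ℝ) hx]

/-- The `j`-th partial derivative. -/
def partialDeriv (j : Fin d) (f : Ed d → S) (x : Ed d) : S :=
  fderiv ℝ f x (EuclideanSpace.single j 1)

theorem partialDeriv_comp_clm (T : S →L[ℝ] S) {f : Ed d → S} (hf : ContDiff ℝ 1 f) (j : Fin d)
    (x : Ed d) : fderiv ℝ (fun x => T (f x)) x (EuclideanSpace.single j 1) =
      T (partialDeriv j f x) := by
  have h := T.hasFDerivAt.comp x ((hf.differentiable (by norm_num)) x).hasFDerivAt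
  exact congrArg (fun L : Ed d →L[ℝ] S => L (EuclideanSpace.single j 1)) h.fderiv

theorem fderiv_coord_smul {f : Ed d → S} (hf : ContDiff ℝ 1 f) (i j : Fin d) (x : Ed d) :
    fderiv ℝ (fun x => x j • f x) x (EuclideanSpace.single i 1) =
      x j • partialDeriv i f x + if i = j then f x else 0 := by
  have h := (EuclideanSpace.proj (𝕜 := ℝ) j).hasFDerivAt (x := x) |>.smul
    ((hf.differentiable (by norm_num)) x).hasFDerivAt
  have h2 : fderiv ℝ (fun x => x j • f x) x = _ := h.fderiv
  rw [h2]
  by_cases hij : i = j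
  · simp [partialDeriv, hij]
  · simp [partialDeriv, hij, Ne.symm hij]

theorem contDiff_partialDeriv {f : Ed d → S} (hf : ContDiff ℝ 2 f) (j : Fin d) :
    ContDiff ℝ 1 (partialDeriv j f) :=
  (hf.fderiv_right (by norm_num)).clm_apply contDiff_const

theorem partialDeriv_comm {f : Ed d → S} (hf : ContDiff ℝ 2 f) (i j : Fin d) (x : Ed d) :
    partialDeriv i (partialDeriv j f) x = partialDeriv j (partialDeriv i f) x := by
  have hd : DifferentiableAt ℝ (fderiv ℝ f) x :=
    (hf.fderiv_right (m := 1) (by norm_num)).differentiable (by norm_num) x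
  have key : ∀ k l, partialDeriv k (partialDeriv l f) x = fderiv ℝ (fderiv ℝ f) x
      (EuclideanSpace.single k 1) (EuclideanSpace.single l 1) := fun k l => by
    change fderiv ℝ (fun y => fderiv ℝ f y (EuclideanSpace.single l 1)) x _ = _
    rw [fderiv_clm_apply hd (differentiableAt_const _)]
    simp
  rw [key, key]
  exact (hf.contDiffAt.isSymmSndFDerivAt (by simp)) _ _

theorem partialDeriv_eq_zero_off_tsupport {f : Ed d → S} {x : Ed d} (hx : x ∉ tsupport f)
    (j : Fin d) : partialDeriv j f x = 0 := by
  simp [partialDeriv, fderiv_of_notMem_tsupport (𝕜 := ℝ) hx]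

variable {e ε : Fin d → S →L[ℝ] S}

theorem integral_inner_clifford_partialDeriv
    (hee : ∀ i j (x : S), e i (e j x) + e j (e i x) = if i = j then (-2 : ℝ) • x else 0)
    (he' : ∀ i (x y : S), ⟪e i x, y⟫ = -⟪x, e i y⟫)
    {f : Ed d → S} (hf : ContDiff ℝ 2 f) (hc : HasCompactSupport f) (i j : Fin d) :
    ∫ x, (⟪e i (partialDeriv i f x), e j (partialDeriv j f x)⟫ -
      if i = j then ‖partialDeriv i f x‖ ^ 2 else 0) = 0 := by
  have hf1 : ContDiff ℝ 1 f := hf.of_le (by norm_num)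
  have hD := fun k => contDiff_partialDeriv hf k
  have hDc := fun k => (hD k).continuous
  have hDD := fun k l => (((hD l).continuous_fderiv (by norm_num)).clm_apply
    (continuous_const (y := EuclideanSpace.single k (1 : ℝ))) :
    Continuous (partialDeriv k (partialDeriv l f)))
  have ibp := fun k l => integral_inner_fderiv_add_eq_zero
    (a := fun x => e i (partialDeriv k f x)) (b := fun x => e j (f x))
    ((e i).contDiff.comp (hD k)) ((e j).contDiff.comp hf1)
    (hc.comp_left (g := e j) (map_zero _)) (EuclideanSpace.single l 1)
  simp only [partialDeriv_comp_clm _ (hD _), partialDeriv_comp_clm _ hf1] at ibp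
  have hint : ∀ k l, Integrable fun x => ⟪e i (partialDeriv k f x), e j (partialDeriv l f x)⟫ +
      ⟪e i (partialDeriv l (partialDeriv k f) x), e j (f x)⟫ := fun k l => by
    refine integrable_of_eq_zero_off_tsupport hc
      ((((e i).continuous.comp (hDc k)).inner ((e j).continuous.comp (hDc l))).add
        (((e i).continuous.comp (hDD l k)).inner ((e j).continuous.comp hf.continuous)))
      fun x hx => ?_
    simp [image_eq_zero_of_notMem_tsupport hx, partialDeriv_eq_zero_off_tsupport hx]
  have hsub := integral_sub (hint i j) (hint j i)
  rw [ibp, ibp, sub_zero] at hsub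
  rw [← mul_right_inj' (two_ne_zero (α := ℝ)), mul_zero, ← integral_const_mul]
  refine Eq.trans ?_ hsub
  congr 1 with x
  rw [partialDeriv_comm hf j i]
  have h := congrArg (fun z => ⟪partialDeriv i f x, z⟫) (hee i j (partialDeriv j f x))
  simp only [inner_add_right] at h
  have h1 := he' i (partialDeriv i f x) (e j (partialDeriv j f x))
  have h2 := he' j (partialDeriv i f x) (e i (partialDeriv j f x))
  have h3 := real_inner_comm (e i (partialDeriv j f x)) (e j (partialDeriv i f x))
  split_ifs at h ⊢ with hij
  · subst hij
    rw [inner_smul_right, real_inner_self_eq_norm_sq] at h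
    linarith
  · rw [inner_zero_right] at h
    linarith

theorem integral_inner_clifford_potential
    (heε : ∀ i j (x : S), e i (ε j x) + ε j (e i x) = 0)
    (he' : ∀ i (x y : S), ⟪e i x, y⟫ = -⟪x, e i y⟫)
    (hε' : ∀ i (x y : S), ⟪ε i x, y⟫ = ⟪x, ε i y⟫)
    {f : Ed d → S} (hf : ContDiff ℝ 1 f) (hc : HasCompactSupport f) (i j : Fin d) :
    ∫ x, (2 * ⟪e i (partialDeriv i f x), x j • ε j (f x)⟫ -
      if i = j then ⟪f x, e i (ε i (f x))⟫ else 0) = 0 := by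
  have hef : ContDiff ℝ 1 fun x => e i (f x) := (e i).contDiff.comp hf
  have ibp := integral_inner_fderiv_add_eq_zero (b := fun x => ε j (f x))
    (a := fun x => x j • e i (f x))
    ((EuclideanSpace.proj (𝕜 := ℝ) j).contDiff.smul hef) ((ε j).contDiff.comp hf)
    (hc.comp_left (g := ε j) (map_zero _)) (EuclideanSpace.single i 1)
  have hpe : ∀ x, partialDeriv i (fun x => e i (f x)) x = e i (partialDeriv i f x) :=
    fun x => partialDeriv_comp_clm (e i) hf i x
  simp only [partialDeriv_comp_clm _ hf, fderiv_coord_smul hef, hpe] at ibp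
  refine Eq.trans ?_ ibp
  congr 1 with x
  have hanti : ε j (e i (partialDeriv i f x)) = -e i (ε j (partialDeriv i f x)) :=
    eq_neg_of_add_eq_zero_right (heε _ _ _)
  have h1 : ⟪e i (f x), ε j (partialDeriv i f x)⟫ = ⟪e i (partialDeriv i f x), ε j (f x)⟫ := by
    rw [he', ← inner_neg_right, ← hanti, ← hε', real_inner_comm]
  simp only [inner_add_left, inner_smul_left, inner_smul_right, conj_trivial, h1]
  split_ifs with hij
  · subst hij
    rw [he' i (f x)]
    ring
  · simp only [inner_zero_left]
    ring

theorem integral_inner_partialDeriv_coord {f : Ed d → S} (hf : ContDiff ℝ 1 f)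
    (hc : HasCompactSupport f) (j : Fin d) :
    ∫ x, (2 * ⟪partialDeriv j f x, x j • f x⟫ + ‖f x‖ ^ 2) = 0 := by
  have ibp : ∫ x, (⟪x j • f x, partialDeriv j f x⟫ + ⟪_, f x⟫) = 0 :=
    integral_inner_fderiv_add_eq_zero (b := f) (a := fun x => x j • f x)
    ((EuclideanSpace.proj (𝕜 := ℝ) j).contDiff.smul hf) hf hc (EuclideanSpace.single j 1)
  simp only [fderiv_coord_smul hf, if_true] at ibp
  refine Eq.trans ?_ ibp
  congr 1 with x
  simp only [inner_add_left, inner_smul_left, inner_smul_right, conj_trivial,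
    real_inner_self_eq_norm_sq]
  rw [real_inner_comm (f x)]
  ring

theorem sq_norm_Fop
    (hεε : ∀ i j (x : S), ε i (ε j x) + ε j (ε i x) = if i = j then (2 : ℝ) • x else 0)
    (hε' : ∀ i (x y : S), ⟪ε i x, y⟫ = ⟪x, ε i y⟫) (f : Ed d → S) (x : Ed d) :
    ‖Fop ε f x‖ ^ 2 = ∑ j, ‖x j • f x‖ ^ 2 := by
  have hsum : ∀ i j, ⟪ε i (f x), ε j (f x)⟫ + ⟪ε j (f x), ε i (f x)⟫ =
      if i = j then 2 * ‖f x‖ ^ 2 else 0 := fun i j => by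
    rw [hε', hε', ← inner_add_right, hεε]
    split_ifs <;> simp [inner_smul_right]
  rw [← real_inner_self_eq_norm_sq, Fop]
  simp only [sum_inner, inner_sum]
  have hterm : ∀ i j, ⟪x i • ε i (f x), x j • ε j (f x)⟫ =
      if i = j then ‖x i • f x‖ ^ 2 else 0 := fun i j => by
    have h := hsum i j
    rw [real_inner_comm (ε i (f x)), ← two_mul] at h
    rw [inner_smul_left, inner_smul_right, norm_smul, mul_pow, Real.norm_eq_abs, sq_abs]
    split_ifs at h ⊢ with hij
    · subst hij
      simp only [conj_trivial]
      linear_combination (x i ^ 2 / 2) * h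
    · simp [(mul_eq_zero.1 h).resolve_left two_ne_zero]
  simp [hterm]

theorem integral_sq_norm_Bop
    (hee : ∀ i j (x : S), e i (e j x) + e j (e i x) = if i = j then (-2 : ℝ) • x else 0)
    (hεε : ∀ i j (x : S), ε i (ε j x) + ε j (ε i x) = if i = j then (2 : ℝ) • x else 0)
    (heε : ∀ i j (x : S), e i (ε j x) + ε j (e i x) = 0)
    (he' : ∀ i (x y : S), ⟪e i x, y⟫ = -⟪x, e i y⟫)
    (hε' : ∀ i (x y : S), ⟪ε i x, y⟫ = ⟪x, ε i y⟫)
    {f : Ed d → S} (hf : ContDiff ℝ 2 f) (hc : HasCompactSupport f) :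
    ∫ x, ‖Bop e ε f x‖ ^ 2 = ∫ x, ((∑ j, ‖partialDeriv j f x + x j • f x‖ ^ 2) +
      ∑ j, (‖f x‖ ^ 2 + ⟪f x, e j (ε j (f x))⟫)) := by
  have hf1 : ContDiff ℝ 1 f := hf.of_le (by norm_num)
  have hfc := hf.continuous
  have hDc : ∀ k, Continuous (partialDeriv k f) := fun k => (contDiff_partialDeriv hf k).continuous
  have hD0 := fun x (hx : x ∉ tsupport f) j => partialDeriv_eq_zero_off_tsupport hx j
  have hf0 := fun x (hx : x ∉ tsupport f) => image_eq_zero_of_notMem_tsupport hx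
  have hB : ∀ x, Bop e ε f x = ∑ j, e j (partialDeriv j f x) + ∑ j, x j • ε j (f x) :=
    fun x => rfl
  have hcoord : ∀ j, Continuous fun x : Ed d => x j := fun j => by fun_prop
  have hi1 : Integrable fun x => ‖Bop e ε f x‖ ^ 2 := by
    refine integrable_of_eq_zero_off_tsupport hc ?_ fun x hx => by simp [hB, hf0 x hx, hD0 x hx]
    simp only [hB]
    fun_prop
  have hi2 : Integrable fun x => (∑ j, ‖partialDeriv j f x + x j • f x‖ ^ 2) +
      ∑ j, (‖f x‖ ^ 2 + ⟪f x, e j (ε j (f x))⟫) :=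
    integrable_of_eq_zero_off_tsupport hc (by fun_prop) fun x hx => by simp [hf0 x hx, hD0 x hx]
  have hiA : ∀ i j, Integrable fun x => (⟪e i (partialDeriv i f x), e j (partialDeriv j f x)⟫ -
      if i = j then ‖partialDeriv i f x‖ ^ 2 else 0) := fun i j =>
    integrable_of_eq_zero_off_tsupport hc (by split_ifs <;> fun_prop)
      fun x hx => by simp [hD0 x hx]
  have hiC : ∀ i j, Integrable fun x => (2 * ⟪e i (partialDeriv i f x), x j • ε j (f x)⟫ -
      if i = j then ⟪f x, e i (ε i (f x))⟫ else 0) := fun i j =>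
    integrable_of_eq_zero_off_tsupport hc (by split_ifs <;> fun_prop)
      fun x hx => by simp [hD0 x hx, hf0 x hx]
  have hiE : ∀ j, Integrable fun x => (2 * ⟪partialDeriv j f x, x j • f x⟫ + ‖f x‖ ^ 2) :=
    fun j => integrable_of_eq_zero_off_tsupport hc (by fun_prop)
      fun x hx => by simp [hD0 x hx, hf0 x hx]
  rw [← sub_eq_zero, ← integral_sub hi1 hi2]
  have key : ∀ x, ‖Bop e ε f x‖ ^ 2 - ((∑ j, ‖partialDeriv j f x + x j • f x‖ ^ 2) +
      ∑ j, (‖f x‖ ^ 2 + ⟪f x, e j (ε j (f x))⟫)) =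
      (∑ i, ∑ j, (⟪e i (partialDeriv i f x), e j (partialDeriv j f x)⟫ -
        if i = j then ‖partialDeriv i f x‖ ^ 2 else 0)) +
      (∑ i, ∑ j, (2 * ⟪e i (partialDeriv i f x), x j • ε j (f x)⟫ -
        if i = j then ⟪f x, e i (ε i (f x))⟫ else 0)) -
      ∑ j, (2 * ⟪partialDeriv j f x, x j • f x⟫ + ‖f x‖ ^ 2) := fun x => by
    have hF := sq_norm_Fop hεε hε' f x
    rw [Fop] at hF
    rw [hB, norm_add_sq_real, hF, ← real_inner_self_eq_norm_sq]
    rw [sum_inner, sum_inner]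
    simp only [norm_add_sq_real, inner_sum, Finset.sum_sub_distrib,
      Finset.sum_add_distrib, Finset.sum_ite_eq, Finset.mem_univ, if_true, ← Finset.mul_sum]
    ring
  simp only [key]
  rw [integral_sub, integral_add]
  · rw [integral_finsetSum, integral_finsetSum, integral_finsetSum]
    · simp only [integral_inner_partialDeriv_coord hf1 hc]
      have h1 : ∀ i, ∫ x, ∑ j, (⟪e i (partialDeriv i f x), e j (partialDeriv j f x)⟫ -
          if i = j then ‖partialDeriv i f x‖ ^ 2 else 0) = 0 := fun i => by
        rw [integral_finsetSum _ fun j _ => hiA i j]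
        exact Finset.sum_eq_zero fun j _ => integral_inner_clifford_partialDeriv hee he' hf hc i j
      have h2 : ∀ i, ∫ x, ∑ j, (2 * ⟪e i (partialDeriv i f x), x j • ε j (f x)⟫ -
          if i = j then ⟪f x, e i (ε i (f x))⟫ else 0) = 0 := fun i => by
        rw [integral_finsetSum _ fun j _ => hiC i j]
        exact Finset.sum_eq_zero fun j _ =>
          integral_inner_clifford_potential heε he' hε' hf1 hc i j
      rw [Finset.sum_eq_zero fun i _ => h1 i, Finset.sum_eq_zero fun i _ => h2 i]
      simp
    · exact fun j _ => hiE j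
    · exact fun i _ => integrable_finsetSum _ fun j _ => hiC i j
    · exact fun i _ => integrable_finsetSum _ fun j _ => hiA i j
  · exact integrable_finsetSum _ fun i _ => integrable_finsetSum _ fun j _ => hiA i j
  · exact integrable_finsetSum _ fun i _ => integrable_finsetSum _ fun j _ => hiC i j
  · exact (integrable_finsetSum _ fun i _ => integrable_finsetSum _ fun j _ => hiA i j).add
      (integrable_finsetSum _ fun i _ => integrable_finsetSum _ fun j _ => hiC i j)
  · exact integrable_finsetSum _ fun j _ => hiE j

end Energy

section Gap

theorem sq_norm_eq_sum_apply_single (L : Ed d →L[ℝ] ℝ) :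
    ‖L‖ ^ 2 = ∑ j, L (EuclideanSpace.single j 1) ^ 2 := by
  rw [← (InnerProductSpace.toDual ℝ (Ed d)).symm.norm_map L, EuclideanSpace.norm_sq_eq]
  refine Finset.sum_congr rfl fun j _ => ?_
  rw [← InnerProductSpace.toDual_symm_apply (𝕜 := ℝ), EuclideanSpace.inner_single_right]
  simp

theorem partialDeriv_smul {g : Ed d → ℝ} {f : Ed d → S} {x : Ed d}
    (hg : DifferentiableAt ℝ g x) (hf : DifferentiableAt ℝ f x) (j : Fin d) :
    partialDeriv j (fun x => g x • f x) x =
      g x • partialDeriv j f x + partialDeriv j g x • f x := by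
  have h : fderiv ℝ (fun x => g x • f x) x = _ := (hg.hasFDerivAt.smul hf.hasFDerivAt).fderiv
  simp [partialDeriv, h]

theorem contDiff_exp_mul_sq_norm (c : ℝ) {n : WithTop ℕ∞} :
    ContDiff ℝ n fun x : Ed d => Real.exp (c * ‖x‖ ^ 2) :=
  Real.contDiff_exp.comp (contDiff_const.mul (contDiff_norm_sq ℝ))

theorem partialDeriv_exp_mul_sq_norm (c : ℝ) (j : Fin d) (x : Ed d) :
    partialDeriv j (fun x : Ed d => Real.exp (c * ‖x‖ ^ 2)) x =
      Real.exp (c * ‖x‖ ^ 2) * (2 * c * x j) := by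
  have h := ((hasStrictFDerivAt_norm_sq x).hasFDerivAt.const_mul c).exp
  have h' : fderiv ℝ (fun x : Ed d => Real.exp (c * ‖x‖ ^ 2)) x = _ := h.fderiv
  rw [partialDeriv, h']
  simp [EuclideanSpace.inner_single_right]
  ring

theorem gaussian_eq (u : S) :
    gaussian d u = fun x => Real.exp (-1 / 2 * ‖x‖ ^ 2) • u := by
  funext x
  rw [gaussian]
  congr 2
  ring

theorem contDiff_gaussian (u : S) {n : WithTop ℕ∞} : ContDiff ℝ n (gaussian d u) := by
  rw [gaussian_eq]
  exact (contDiff_exp_mul_sq_norm _).smul contDiff_const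

theorem partialDeriv_gaussian (u : S) (j : Fin d) (x : Ed d) :
    partialDeriv j (gaussian d u) x = -(x j • gaussian d u x) := by
  rw [gaussian_eq, partialDeriv_smul ((contDiff_exp_mul_sq_norm (n := 1) _).differentiable
    (by norm_num) x) (differentiableAt_const _), partialDeriv_exp_mul_sq_norm]
  simp only [partialDeriv, fderiv_fun_const, Pi.zero_apply, zero_apply,
    smul_zero, zero_add, smul_smul, ← neg_smul]
  congr 1
  ring

theorem smul_gaussian (c : ℝ) (u : S) :
    (fun x => c • gaussian d u x) = gaussian d (c • u) := by
  funext x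
  simp only [gaussian]
  exact smul_comm _ _ _

theorem sq_norm_gaussian (u : S) (x : Ed d) :
    ‖gaussian d u x‖ ^ 2 = Real.exp (-‖x‖ ^ 2) * ‖u‖ ^ 2 := by
  rw [gaussian, norm_smul, mul_pow, Real.norm_eq_abs, sq_abs, ← Real.exp_nat_mul]
  congr 2
  push_cast
  ring

theorem integral_sq_norm_gaussian_pos {u : S} (hu : u ≠ 0) :
    0 < ∫ x, ‖gaussian d u x‖ ^ 2 := by
  simp only [sq_norm_gaussian, integral_mul_const]
  have := norm_pos_iff.2 hu
  exact mul_pos integral_exp_neg_sq_norm_pos (by positivity)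

variable {e ε : Fin d → S →L[ℝ] S} {u : S}

theorem Bop_gaussian (hvac : ∀ j, e j u = ε j u) (x : Ed d) : Bop e ε (gaussian d u) x = 0 := by
  change ∑ j, e j (partialDeriv j (gaussian d u) x) + ∑ j, x j • ε j (gaussian d u x) = 0
  rw [← Finset.sum_add_distrib]
  refine Finset.sum_eq_zero fun j _ => ?_
  rw [partialDeriv_gaussian]
  simp [gaussian, hvac]

theorem Bop_kerProj (hvac : ∀ j, e j u = ε j u) (f : Ed d → S) (x : Ed d) :
    Bop e ε (kerProj d u f) x = 0 := by
  unfold kerProj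
  rw [smul_gaussian]
  exact Bop_gaussian (fun j => by rw [map_smul, map_smul, hvac]) x

theorem kerProj_kerProj (hu : u ≠ 0) (f : Ed d → S) :
    kerProj d u (kerProj d u f) = kerProj d u f := by
  have h := (integral_sq_norm_gaussian_pos (d := d) hu).ne'
  funext x
  rw [kerProj]
  simp only [kerProj, inner_smul_left, real_inner_self_eq_norm_sq, integral_const_mul,
    conj_trivial]
  rw [mul_div_cancel_right₀ _ h]

theorem kerProj_comp_grading {ι : S →L[ℝ] S} (hιsa : ∀ x y, ⟪ι x, y⟫ = ⟪x, ι y⟫)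
    (hιu : ι u = u) (f : Ed d → S) (x : Ed d) :
    kerProj d u (fun y => ι (f y)) x = ι (kerProj d u f x) := by
  have h : ∀ y, ι (gaussian d u y) = gaussian d u y := fun y => by
    rw [gaussian, map_smul, hιu]
  simp only [kerProj, hιsa, h, map_smul]

theorem kerProj_Bop (he' : ∀ i (x y : S), ⟪e i x, y⟫ = -⟪x, e i y⟫)
    (hε' : ∀ i (x y : S), ⟪ε i x, y⟫ = ⟪x, ε i y⟫) (hvac : ∀ j, e j u = ε j u)
    {f : Ed d → S} (hf : ContDiff ℝ 1 f) (hc : HasCompactSupport f) (x : Ed d) :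
    kerProj d u (Bop e ε f) x = 0 := by
  have hg : ContDiff ℝ 1 (gaussian d u) := contDiff_gaussian u
  have hfc := hf.continuous
  have hgc := hg.continuous
  have hcf : Continuous (fderiv ℝ f) := hf.continuous_fderiv (by norm_num)
  have hcg : Continuous (fderiv ℝ (gaussian d u)) := hg.continuous_fderiv (by norm_num)
  have ibp : ∀ j, ∫ x, (⟪gaussian d u x, e j (partialDeriv j f x)⟫ +
      ⟪partialDeriv j (gaussian d u) x, e j (f x)⟫) = 0 := fun j => by
    simp only [← partialDeriv_comp_clm (e j) hf]
    exact integral_inner_fderiv_add_eq_zero hg ((e j).contDiff.comp hf)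
      (hc.comp_left (g := e j) (map_zero _)) _
  have hi : ∀ j, Integrable fun x => (⟪gaussian d u x, e j (partialDeriv j f x)⟫ +
      ⟪partialDeriv j (gaussian d u) x, e j (f x)⟫) := fun j => by
    refine integrable_of_eq_zero_off_tsupport hc ?_ fun x hx => by
      simp [image_eq_zero_of_notMem_tsupport hx, partialDeriv_eq_zero_off_tsupport hx]
    unfold partialDeriv
    fun_prop
  have key : ∀ x, ⟪Bop e ε f x, gaussian d u x⟫ =
      ∑ j, (⟪gaussian d u x, e j (partialDeriv j f x)⟫ +
        ⟪partialDeriv j (gaussian d u) x, e j (f x)⟫) := fun x => by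
    change ⟪∑ j, e j (partialDeriv j f x) + ∑ j, x j • ε j (f x), _⟫ = _
    rw [← Finset.sum_add_distrib, sum_inner]
    refine Finset.sum_congr rfl fun j _ => ?_
    have h : ⟪u, e j (f x)⟫ = -⟪ε j (f x), u⟫ := by
      rw [real_inner_comm, he', hvac, ← hε']
    rw [partialDeriv_gaussian, inner_add_left, real_inner_comm]
    simp only [gaussian, inner_neg_left, inner_smul_left, inner_smul_right, conj_trivial, h]
    ring
  have hz : ∫ x, ⟪Bop e ε f x, gaussian d u x⟫ = 0 := by
    simp only [key]
    rw [integral_finsetSum _ fun j _ => hi j]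
    exact Finset.sum_eq_zero fun j _ => ibp j
  rw [kerProj, hz, zero_div, zero_smul]

/-- The spectral gap of the scalar harmonic oscillator above its ground state. -/
theorem integral_sq_le_of_integral_exp_mul_eq_zero {φ : Ed d → ℝ} (hφ : ContDiff ℝ 1 φ)
    (hc : HasCompactSupport φ) (h0 : ∫ x, Real.exp (-1 / 2 * ‖x‖ ^ 2) * φ x = 0) :
    ∫ x, φ x ^ 2 ≤ ∫ x, ∑ j, (partialDeriv j φ x + x j * φ x) ^ 2 := by
  have hE : ContDiff ℝ 1 fun x : Ed d => Real.exp (1 / 2 * ‖x‖ ^ 2) := contDiff_exp_mul_sq_norm _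
  have hmul : ∀ x : Ed d, Real.exp (-‖x‖ ^ 2) * Real.exp (1 / 2 * ‖x‖ ^ 2) =
      Real.exp (-1 / 2 * ‖x‖ ^ 2) := fun x => by
    rw [← Real.exp_add]
    congr 1
    ring
  have hsq : ∀ x : Ed d, Real.exp (-‖x‖ ^ 2) * Real.exp (1 / 2 * ‖x‖ ^ 2) ^ 2 = 1 := fun x => by
    rw [← Real.exp_nat_mul, ← Real.exp_add, Real.exp_eq_one_iff]
    push_cast
    ring
  have hs : HasCompactSupport fun x => Real.exp (1 / 2 * ‖x‖ ^ 2) * φ x := hc.mul_left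
  have hh : ContDiff ℝ 1 fun x => Real.exp (1 / 2 * ‖x‖ ^ 2) * φ x := hE.mul hφ
  have hz : ∫ x, Real.exp (-‖x‖ ^ 2) * (Real.exp (1 / 2 * ‖x‖ ^ 2) * φ x) = 0 := by
    simpa only [← mul_assoc, hmul] using h0
  have hP := gaussian_poincare hh hs hz
  have hd : ∀ x j, fderiv ℝ (fun x => Real.exp (1 / 2 * ‖x‖ ^ 2) * φ x) x
      (EuclideanSpace.single j 1) =
      Real.exp (1 / 2 * ‖x‖ ^ 2) * (partialDeriv j φ x + x j * φ x) := fun x j => by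
    refine (partialDeriv_smul (hE.differentiable (by norm_num) x)
      (hφ.differentiable (by norm_num) x) j).trans ?_
    rw [partialDeriv_exp_mul_sq_norm, smul_eq_mul, smul_eq_mul]
    ring
  simp only [sq_norm_eq_sum_apply_single, hd, mul_pow, ← Finset.mul_sum] at hP
  simpa only [← mul_assoc, hsq, one_mul] using hP

/-- A pointwise lower bound for the energy density of the Bott–Dirac operator, which vanishes
identically exactly on the multiples of the ground state. -/
def energyDensity (u : S) (f : Ed d → S) (x : Ed d) : ℝ :=
  (∑ j, ‖partialDeriv j f x + x j • f x‖ ^ 2) + (‖f x‖ ^ 2 - ⟪u, f x⟫ ^ 2 / ‖u‖ ^ 2)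

theorem sq_inner_div_le (u v : S) : ⟪u, v⟫ ^ 2 / ‖u‖ ^ 2 ≤ ‖v‖ ^ 2 := by
  refine div_le_of_le_mul₀ (sq_nonneg _) (sq_nonneg _) ?_
  rw [← mul_pow, mul_comm, ← sq_abs]
  exact pow_le_pow_left₀ (abs_nonneg _) (abs_real_inner_le_norm u v) 2

theorem energyDensity_nonneg (u : S) (f : Ed d → S) (x : Ed d) : 0 ≤ energyDensity u f x :=
  add_nonneg (Finset.sum_nonneg fun _ _ => sq_nonneg _) (sub_nonneg.2 (sq_inner_div_le _ _))

theorem continuous_energyDensity (u : S) {f : Ed d → S} (hf : ContDiff ℝ 1 f) :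
    Continuous (energyDensity u f) := by
  have hfc := hf.continuous
  have hcf : Continuous (fderiv ℝ f) := hf.continuous_fderiv (by norm_num)
  unfold energyDensity partialDeriv
  fun_prop

theorem integrable_energyDensity (u : S) {f : Ed d → S} (hf : ContDiff ℝ 1 f)
    (hc : HasCompactSupport f) : Integrable (energyDensity u f) :=
  integrable_of_eq_zero_off_tsupport hc (continuous_energyDensity u hf) fun x hx => by
    simp [energyDensity, image_eq_zero_of_notMem_tsupport hx, partialDeriv_eq_zero_off_tsupport hx]

theorem integral_energyDensity_le
    (hdim : Module.finrank ℝ S = 2 ^ d)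
    (hee : ∀ i j (x : S), e i (e j x) + e j (e i x) = if i = j then (-2 : ℝ) • x else 0)
    (hεε : ∀ i j (x : S), ε i (ε j x) + ε j (ε i x) = if i = j then (2 : ℝ) • x else 0)
    (heε : ∀ i j (x : S), e i (ε j x) + ε j (e i x) = 0)
    (he' : ∀ i (x y : S), ⟪e i x, y⟫ = -⟪x, e i y⟫)
    (hε' : ∀ i (x y : S), ⟪ε i x, y⟫ = ⟪x, ε i y⟫)
    (hu : u ≠ 0) (hvac : ∀ j, e j u = ε j u)
    {f : Ed d → S} (hf : ContDiff ℝ 2 f) (hc : HasCompactSupport f) :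
    ∫ x, energyDensity u f x ≤ ∫ x, ‖Bop e ε f x‖ ^ 2 := by
  have hf1 : ContDiff ℝ 1 f := hf.of_le (by norm_num)
  rw [integral_sq_norm_Bop hee hεε heε he' hε' hf hc]
  refine integral_mono (integrable_energyDensity u hf1 hc) ?_ fun x => ?_
  · have hfc := hf.continuous
    have hcf : Continuous (fderiv ℝ f) := hf.continuous_fderiv (by norm_num)
    refine integrable_of_eq_zero_off_tsupport hc ?_ fun x hx => by
      simp [image_eq_zero_of_notMem_tsupport hx, partialDeriv_eq_zero_off_tsupport hx]
    unfold partialDeriv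
    fun_prop
  · have h := sq_norm_sub_vacuum_le hdim hee heε he' hε' hu hvac (f x)
    simp only [energyDensity]
    linarith

theorem integral_sq_norm_le_integral_energyDensity (hu : u ≠ 0) {f : Ed d → S}
    (hf : ContDiff ℝ 1 f) (hc : HasCompactSupport f)
    (h0 : (∫ x, ⟪f x, gaussian d u x⟫) = 0) :
    ∫ x, ‖f x‖ ^ 2 ≤ ∫ x, energyDensity u f x := by
  have hu2 : 0 < ‖u‖ ^ 2 := by
    have := norm_pos_iff.2 hu
    positivity
  have hφ : ContDiff ℝ 1 fun x => ⟪u, f x⟫ := contDiff_const.inner ℝ hf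
  have hφc : HasCompactSupport fun x => ⟪u, f x⟫ :=
    hc.comp_left (g := fun v => ⟪u, v⟫) (inner_zero_right _)
  have hdφ : ∀ x j, partialDeriv j (fun x => ⟪u, f x⟫) x = ⟪u, partialDeriv j f x⟫ := fun x j => by
    rw [partialDeriv, fderiv_inner_apply ℝ (differentiableAt_const u)
      (hf.differentiable (by norm_num) x)]
    simp [partialDeriv]
  have hsc := integral_sq_le_of_integral_exp_mul_eq_zero hφ hφc (by
    rw [← h0, gaussian_eq]
    congr 1 with x
    rw [inner_smul_right, real_inner_comm u])
  simp only [hdφ] at hsc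
  have hfc := hf.continuous
  have hcf : Continuous (fderiv ℝ f) := hf.continuous_fderiv (by norm_num)
  have hi1 : Integrable fun x => ‖f x‖ ^ 2 := integrable_of_eq_zero_off_tsupport hc (by fun_prop)
    fun x hx => by simp [image_eq_zero_of_notMem_tsupport hx]
  have hi2 : Integrable fun x => ⟪u, f x⟫ ^ 2 :=
    integrable_of_eq_zero_off_tsupport hc (by fun_prop)
      fun x hx => by simp [image_eq_zero_of_notMem_tsupport hx]
  have hi3 : Integrable fun x => ∑ j, (⟪u, partialDeriv j f x⟫ + x j * ⟪u, f x⟫) ^ 2 := by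
    refine integrable_of_eq_zero_off_tsupport hc ?_ fun x hx => by
      simp [image_eq_zero_of_notMem_tsupport hx, partialDeriv_eq_zero_off_tsupport hx]
    unfold partialDeriv
    fun_prop
  have hi4 : Integrable fun x => ((∑ j, (⟪u, partialDeriv j f x⟫ + x j * ⟪u, f x⟫) ^ 2) -
      ⟪u, f x⟫ ^ 2) / ‖u‖ ^ 2 := (hi3.sub hi2).div_const _
  have hle : ∫ x, (‖f x‖ ^ 2 + ((∑ j, (⟪u, partialDeriv j f x⟫ + x j * ⟪u, f x⟫) ^ 2) -
      ⟪u, f x⟫ ^ 2) / ‖u‖ ^ 2) ≤ ∫ x, energyDensity u f x := by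
    refine integral_mono (hi1.add hi4)
      (integrable_energyDensity u hf hc) fun x => ?_
    have hs : (∑ j, (⟪u, partialDeriv j f x⟫ + x j * ⟪u, f x⟫) ^ 2) / ‖u‖ ^ 2 ≤
        ∑ j, ‖partialDeriv j f x + x j • f x‖ ^ 2 := by
      rw [Finset.sum_div]
      refine Finset.sum_le_sum fun j _ => ?_
      rw [← real_inner_smul_right, ← inner_add_right]
      exact sq_inner_div_le _ _
    simp only [energyDensity, sub_div]
    linarith
  refine le_trans ?_ hle
  rw [integral_add hi1 hi4, integral_div, integral_sub hi3 hi2]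
  exact le_add_of_nonneg_right (div_nonneg (sub_nonneg.2 hsc) hu2.le)

theorem eq_smul_gaussian_of_energyDensity_eq_zero (hu : u ≠ 0) {f : Ed d → S}
    (hf : ContDiff ℝ 1 f) (h0 : ∀ x, energyDensity u f x = 0) :
    ∃ c : ℝ, f = fun x => c • gaussian d u x := by
  have hE : ContDiff ℝ 1 fun x : Ed d => Real.exp (1 / 2 * ‖x‖ ^ 2) := contDiff_exp_mul_sq_norm _
  have hfd : Differentiable ℝ f := hf.differentiable (by norm_num)
  have hsplit := fun x => (add_eq_zero_iff_of_nonneg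
    (Finset.sum_nonneg fun _ _ => sq_nonneg _) (sub_nonneg.2 (sq_inner_div_le u (f x)))).1 (h0 x)
  have hann : ∀ x j, partialDeriv j f x + x j • f x = 0 := fun x j => by
    have h := (Finset.sum_eq_zero_iff_of_nonneg fun _ _ => sq_nonneg _).1 (hsplit x).1 j
      (Finset.mem_univ j)
    exact norm_eq_zero.1 (pow_eq_zero_iff two_ne_zero |>.1 h)
  have hconst : ∀ x, Real.exp (1 / 2 * ‖x‖ ^ 2) • f x = f 0 := fun x => by
    have h := is_const_of_fderiv_eq_zero (𝕜 := ℝ)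
      (f := fun x => Real.exp (1 / 2 * ‖x‖ ^ 2) • f x)
      ((hE.smul hf).differentiable (by norm_num)) (fun y => ?_) x 0
    · simpa using h
    · refine ContinuousLinearMap.coe_injective
        ((EuclideanSpace.basisFun (Fin d) ℝ).toBasis.ext fun j => ?_)
      have hj := partialDeriv_smul (hE.differentiable (by norm_num) y) (hfd y) j
      rw [partialDeriv_exp_mul_sq_norm, mul_smul, ← smul_add] at hj
      rw [show 2 * (1 / 2) * y j = y j by ring, hann, smul_zero] at hj
      simpa [partialDeriv] using hj
  have hv : f 0 = (⟪u, f 0⟫ / ‖u‖ ^ 2) • u := by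
    have h := sub_eq_zero.1 (hsplit 0).2
    have hu2 : ‖u‖ ^ 2 ≠ 0 := by simpa using hu
    rw [← sub_eq_zero, ← norm_eq_zero, ← pow_eq_zero_iff two_ne_zero, norm_sub_sq_real, h,
      inner_smul_right, norm_smul, mul_pow, Real.norm_eq_abs, sq_abs, real_inner_comm u]
    field_simp
    ring
  refine ⟨⟪u, f 0⟫ / ‖u‖ ^ 2, funext fun x => ?_⟩
  have hinv : Real.exp (-1 / 2 * ‖x‖ ^ 2) * Real.exp (1 / 2 * ‖x‖ ^ 2) = 1 := by
    rw [← Real.exp_add, Real.exp_eq_one_iff]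
    ring
  rw [gaussian_eq, smul_comm, ← hv, ← hconst x, smul_smul, hinv, one_smul]

theorem energyDensity_congr {f g : Ed d → S} {x : Ed d} (h : f =ᶠ[nhds x] g) :
    energyDensity u f x = energyDensity u g x := by
  simp only [energyDensity, partialDeriv, h.fderiv_eq, h.eq_of_nhds]

theorem Bop_smul {g : Ed d → ℝ} {f : Ed d → S} {x : Ed d} (hg : DifferentiableAt ℝ g x)
    (hf : DifferentiableAt ℝ f x) :
    Bop e ε (fun x => g x • f x) x = g x • Bop e ε f x + ∑ j, partialDeriv j g x • e j (f x) := by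
  change ∑ j, e j (partialDeriv j _ x) + ∑ j, x j • ε j (g x • f x) =
    g x • (∑ j, e j (partialDeriv j f x) + ∑ j, x j • ε j (f x)) + _
  simp only [partialDeriv_smul hg hf, map_add, map_smul, Finset.sum_add_distrib, smul_add,
    Finset.smul_sum, smul_comm (g x)]
  abel

theorem exists_smooth_cutoff (d : ℕ) : ∃ M : ℝ, 0 ≤ M ∧ ∀ R : ℝ, 0 < R →
    ∃ χ : Ed d → ℝ, ContDiff ℝ 2 χ ∧ HasCompactSupport χ ∧
      (∀ x ∈ Metric.ball (0 : Ed d) R, χ x = 1) ∧ ∀ x j, |partialDeriv j χ x| ≤ M / R := by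
  let b : ContDiffBump (0 : Ed d) := ⟨1, 2, one_pos, one_lt_two⟩
  have hb : ContDiff ℝ 2 b := b.contDiff
  obtain ⟨M, hM⟩ := (hb.continuous_fderiv (by norm_num)).bounded_above_of_compact_support
    (b.hasCompactSupport.fderiv ℝ)
  refine ⟨M, (norm_nonneg _).trans (hM 0), fun R hR => ⟨fun x => b (R⁻¹ • x),
    hb.comp (contDiff_const_smul _), ?_, fun x hx => ?_, fun x j => ?_⟩⟩
  · exact b.hasCompactSupport.comp_smul (inv_ne_zero hR.ne')
  · refine b.one_of_mem_closedBall ?_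
    rw [mem_closedBall_zero_iff, norm_smul, norm_inv, Real.norm_of_nonneg hR.le]
    rw [mem_ball_zero_iff] at hx
    change R⁻¹ * ‖x‖ ≤ 1
    rw [inv_mul_le_iff₀ hR]
    linarith
  · have h := ((hb.differentiable (by norm_num) (R⁻¹ • x)).hasFDerivAt.comp x
      ((hasFDerivAt_id x).const_smul R⁻¹)).fderiv
    have h' : fderiv ℝ (fun x : Ed d => b (R⁻¹ • x)) x = _ := h
    rw [partialDeriv, h']
    have hle := (fderiv ℝ b (R⁻¹ • x)).le_of_opNorm_le (hM _) (EuclideanSpace.single j (1 : ℝ))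
    rw [PiLp.norm_single, norm_one, mul_one, Real.norm_eq_abs] at hle
    simp only [ContinuousLinearMap.comp_apply, smul_apply, map_smul,
      ContinuousLinearMap.id_apply, smul_eq_mul, abs_mul, abs_inv, abs_of_pos hR]
    rw [div_eq_inv_mul]
    exact mul_le_mul_of_nonneg_left hle (inv_nonneg.2 hR.le)

theorem energyDensity_eq_zero_of_Bop_eq_zero
    (hdim : Module.finrank ℝ S = 2 ^ d)
    (hee : ∀ i j (x : S), e i (e j x) + e j (e i x) = if i = j then (-2 : ℝ) • x else 0)
    (hεε : ∀ i j (x : S), ε i (ε j x) + ε j (ε i x) = if i = j then (2 : ℝ) • x else 0)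
    (heε : ∀ i j (x : S), e i (ε j x) + ε j (e i x) = 0)
    (he' : ∀ i (x y : S), ⟪e i x, y⟫ = -⟪x, e i y⟫)
    (hε' : ∀ i (x y : S), ⟪ε i x, y⟫ = ⟪x, ε i y⟫)
    (hu : u ≠ 0) (hvac : ∀ j, e j u = ε j u)
    {f : Ed d → S} (hf : ContDiff ℝ 2 f) (hint : Integrable fun x => ‖f x‖ ^ 2)
    (hB : ∀ x, Bop e ε f x = 0) (x : Ed d) : energyDensity u f x = 0 := by
  obtain ⟨M, hM0, hM⟩ := exists_smooth_cutoff d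
  have hcont := continuous_energyDensity u (hf.of_le (by norm_num) : ContDiff ℝ 1 f)
  set r := ‖x‖ + 1 with hr
  have hr0 : 0 < r := by positivity
  set C := (M * ∑ j, ‖e j‖) ^ 2 * ∫ x, ‖f x‖ ^ 2 with hC
  have hbound : ∀ R, r ≤ R →
      ∫ y in Metric.ball (0 : Ed d) r, energyDensity u f y ≤ C * (R ^ 2)⁻¹ := fun R hR => by
    have hR0 : 0 < R := hr0.trans_le hR
    obtain ⟨χ, hχ, hχc, hχ1, hχd⟩ := hM R hR0
    have hψ : ContDiff ℝ 2 fun y => χ y • f y := hχ.smul hf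
    have hψc : HasCompactSupport fun y => χ y • f y := hχc.smul_right
    have hBψ : ∀ y, ‖Bop e ε (fun y => χ y • f y) y‖ ^ 2 ≤
        (M / R * ∑ j, ‖e j‖) ^ 2 * ‖f y‖ ^ 2 := fun y => by
      rw [Bop_smul (hχ.differentiable (by norm_num) y) (hf.differentiable (by norm_num) y), hB,
        smul_zero, zero_add, ← mul_pow]
      refine pow_le_pow_left₀ (norm_nonneg _) ((norm_sum_le _ _).trans ?_) 2
      rw [Finset.mul_sum, Finset.sum_mul]
      refine Finset.sum_le_sum fun j _ => ?_
      rw [norm_smul, mul_assoc]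
      exact mul_le_mul (hχd y j) ((e j).le_opNorm _) (norm_nonneg _) (by positivity)
    calc ∫ y in Metric.ball (0 : Ed d) r, energyDensity u f y
        = ∫ y in Metric.ball (0 : Ed d) r, energyDensity u (fun y => χ y • f y) y := by
          refine setIntegral_congr_fun Metric.isOpen_ball.measurableSet fun y hy =>
            energyDensity_congr ?_
          filter_upwards [Metric.isOpen_ball.mem_nhds hy] with z hz
          rw [hχ1 z (Metric.ball_subset_ball hR hz), one_smul]
      _ ≤ ∫ y, energyDensity u (fun y => χ y • f y) y :=
          setIntegral_le_integral (integrable_energyDensity u (hψ.of_le (by norm_num)) hψc)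
            (Filter.Eventually.of_forall fun y => energyDensity_nonneg _ _ _)
      _ ≤ ∫ y, ‖Bop e ε (fun y => χ y • f y) y‖ ^ 2 :=
          integral_energyDensity_le hdim hee hεε heε he' hε' hu hvac hψ hψc
      _ ≤ ∫ y, (M / R * ∑ j, ‖e j‖) ^ 2 * ‖f y‖ ^ 2 :=
          integral_mono_of_nonneg (Filter.Eventually.of_forall fun y => sq_nonneg _)
            (hint.const_mul _) (Filter.Eventually.of_forall hBψ)
      _ = C * (R ^ 2)⁻¹ := by
          rw [integral_const_mul, hC]
          ring
  have hlim : Filter.Tendsto (fun R : ℝ => C * (R ^ 2)⁻¹) Filter.atTop (nhds 0) := by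
    simpa using (tendsto_inv_atTop_zero.comp
      (Filter.tendsto_pow_atTop (α := ℝ) two_ne_zero)).const_mul C
  have hle : ∫ y in Metric.ball (0 : Ed d) r, energyDensity u f y ≤ 0 :=
    ge_of_tendsto hlim ((Filter.eventually_ge_atTop r).mono hbound)
  have hion : IntegrableOn (energyDensity u f) (Metric.ball 0 r) :=
    (hcont.continuousOn.integrableOn_compact (isCompact_closedBall 0 r)).mono_set
      Metric.ball_subset_closedBall
  have hae := (setIntegral_eq_zero_iff_of_nonneg_ae
    (Filter.Eventually.of_forall fun y => energyDensity_nonneg u f y) hion).1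
    (le_antisymm hle (integral_nonneg fun y => energyDensity_nonneg u f y))
  exact Measure.eqOn_open_of_ae_eq hae Metric.isOpen_ball hcont.continuousOn
    continuousOn_const (by simp [hr])

end Gap

theorem kernel_projection_of_bott_dirac
    (d : ℕ) (S : Type) [NormedAddCommGroup S] [InnerProductSpace ℝ S]
    (e ε : Fin d → S →L[ℝ] S)
    (hdim : Module.finrank ℝ S = 2 ^ d)
    (hee : ∀ i j (x : S), e i (e j x) + e j (e i x) = if i = j then (-2 : ℝ) • x else 0)
    (hεε : ∀ i j (x : S), ε i (ε j x) + ε j (ε i x) = if i = j then (2 : ℝ) • x else 0)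
    (heε : ∀ i j (x : S), e i (ε j x) + ε j (e i x) = 0)
    (he' : ∀ i (x y : S), ⟪e i x, y⟫ = -⟪x, e i y⟫)
    (hε' : ∀ i (x y : S), ⟪ε i x, y⟫ = ⟪x, ε i y⟫)
    (u : S) (hu : u ≠ 0) (hvac : ∀ j, e j u = ε j u)
    (ι : S →L[ℝ] S) (hι2 : ∀ x, ι (ι x) = x) (hιsa : ∀ x y, ⟪ι x, y⟫ = ⟪x, ι y⟫)
    (hιe : ∀ j x, ι (e j x) = -e j (ι x)) (hιε : ∀ j x, ι (ε j x) = -ε j (ι x))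
    (hιu : ι u = u) :
    -- the kernel of `B` is spanned by the Gaussian: it is a rank-one kernel
    (∀ x, Bop e ε (gaussian d u) x = 0) ∧
    (∀ f : Ed d → S, ContDiff ℝ (⊤ : ℕ∞) f → Integrable (fun x => ‖f x‖ ^ 2) →
      (∀ x, Bop e ε f x = 0) → ∃ c : ℝ, f = fun x => c • gaussian d u x) ∧
    -- `p₀` is a projection …
    (∀ f : Ed d → S, Integrable (fun y => ⟪f y, gaussian d u y⟫) →
      kerProj d u (kerProj d u f) = kerProj d u f) ∧
    -- … commuting with the grading `ι` …
    (∀ (f : Ed d → S) (x : Ed d),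
      kerProj d u (fun y => ι (f y)) x = ι (kerProj d u f x)) ∧
    -- … and with `B`: `B p₀ = 0 = p₀ B` (on the initial domain)
    (∀ (f : Ed d → S) (x : Ed d), Bop e ε (kerProj d u f) x = 0) ∧
    (∀ f : Ed d → S, ContDiff ℝ (⊤ : ℕ∞) f → HasCompactSupport f →
      ∀ x, kerProj d u (Bop e ε f) x = 0) ∧
    -- on `Im (1 − p₀)` one has `B² ≥ 1`
    (∀ f : Ed d → S, ContDiff ℝ (⊤ : ℕ∞) f → HasCompactSupport f →
      (∫ x, ⟪f x, gaussian d u x⟫) = 0 →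
      (∫ x, ‖Bop e ε f x‖ ^ 2) ≥ ∫ x, ‖f x‖ ^ 2) := by
  have h12 : (1 : WithTop ℕ∞) ≤ ((⊤ : ℕ∞) : WithTop ℕ∞) := by exact_mod_cast le_top
  have h22 : (2 : WithTop ℕ∞) ≤ ((⊤ : ℕ∞) : WithTop ℕ∞) :=
    WithTop.coe_le_coe.2 (le_top : (2 : ℕ∞) ≤ ⊤)
  refine ⟨Bop_gaussian hvac, fun f hf hint hB => ?_, fun f _ => kerProj_kerProj hu f,
    kerProj_comp_grading hιsa hιu, Bop_kerProj hvac,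
    fun f hf hc => kerProj_Bop he' hε' hvac (hf.of_le h12) hc, fun f hf hc h0 => ?_⟩
  · exact eq_smul_gaussian_of_energyDensity_eq_zero hu (hf.of_le h12)
      (energyDensity_eq_zero_of_Bop_eq_zero hdim hee hεε heε he' hε' hu hvac (hf.of_le h22)
        hint hB)
  · exact (integral_sq_norm_le_integral_energyDensity hu (hf.of_le h12) hc h0).trans
      (integral_energyDensity_le hdim hee hεε heε he' hε' hu hvac (hf.of_le h22) hc)
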